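/- Let (A, ≺_ω, ≻_ω, Ω) be a pre-anti-flexible family algebra. Define, for all α, β ∈ Ω and x, y ∈ A, [x, y]_{α,β} := (x ≻_α y + x ≺_β y) − (y ≻_β x + y ≺_α x). Then (A, [·,·]_{α,β}, Ω) is an Ω-relative Lie algebra: [x,y]_{α,β} + [y,x]_{β,α} = 0 and [[x,y]_{α,β}, z]_{αβ,γ} + [[y,z]_{β,γ}, x]_{βγ,α} + [[z,x]_{γ,α}, y]_{γα,β} = 0 for all x, y, z ∈ A and α, β, γ ∈ Ω. -/

import Mathlib

/-!
The product `x ∘_{α,β} y = x ≻_α y + x ≺_β y` is relatively anti-flexible: its associator is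
unchanged when the two outer arguments are exchanged together with their indices. Indeed, the
associator is a sum of three groups of terms; the exchange preserves the middle group by the first
axiom of a pre-anti-flexible family algebra, and swaps the other two by the second axiom. The cyclic
sum of double commutators of any relative product over a commutative index set is an alternating sum
of associators, which cancels in pairs when the product is anti-flexible.
-/

section

variable {k Ω A : Type*} [CommSemiring k] [AddCommGroup A] [Module k A]

/-- An `Ω`-relative Lie algebra on `A`. Bilinearity of the brackets is part of their type. -/
structure IsRelativeLie [Mul Ω] (br : Ω → Ω → A →ₗ[k] A →ₗ[k] A) : Prop where
  skew (α β : Ω) (x y : A) : br α β x y + br β α y x = 0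
  jacobi (α β γ : Ω) (x y z : A) :
    br (α * β) γ (br α β x y) z + br (β * γ) α (br β γ y z) x +
      br (γ * α) β (br γ α z x) y = 0

/-- A pre-anti-flexible family algebra on `A`, where `prec ω` is `≺_ω` and `succ ω` is `≻_ω`. -/
structure IsPreAntiFlexibleFamily [Mul Ω] (prec succ : Ω → A →ₗ[k] A →ₗ[k] A) : Prop where
  middle (α β : Ω) (x y z : A) :
    prec β (succ α x y) z - succ α x (prec β y z) =
      prec α (succ β z y) x - succ β z (prec α y x)
  outer (α β : Ω) (x y z : A) :
    succ (α * β) (succ α x y + prec β x y) z - succ α x (succ β y z) =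
      prec α (prec β z y) x - prec (β * α) z (succ β y x + prec α y x)

/-- The commutator `[x, y]_{α,β} = x ∘_{α,β} y - y ∘_{β,α} x` of a relative product `∘`, given as
the family `m` of bilinear maps `m α β x y = x ∘_{α,β} y`. -/
def relativeCommutator (m : Ω → Ω → A →ₗ[k] A →ₗ[k] A) (α β : Ω) : A →ₗ[k] A →ₗ[k] A :=
  m α β - (m β α).flip

/-- The associator of a relative product `m`, in which a product of elements of indices `α` and `β`
is given the index `α * β`. -/
def relativeAssociator [Mul Ω] (m : Ω → Ω → A →ₗ[k] A →ₗ[k] A) (α β γ : Ω) (x y z : A) : A :=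
  m (α * β) γ (m α β x y) z - m α (β * γ) x (m β γ y z)

/-- Relative anti-flexibility of a product: exchanging the outer arguments of the associator along
with their indices leaves it unchanged. -/
def IsRelativeAntiFlexible [Mul Ω] (m : Ω → Ω → A →ₗ[k] A →ₗ[k] A) : Prop :=
  ∀ (α β γ : Ω) (x y z : A), relativeAssociator m α β γ x y z = relativeAssociator m γ β α z y x

/-- The relative product `x ∘_{α,β} y = x ≻_α y + x ≺_β y` of the families `≺ = prec` and
`≻ = succ`. -/
def familyProduct (prec succ : Ω → A →ₗ[k] A →ₗ[k] A) (α β : Ω) : A →ₗ[k] A →ₗ[k] A :=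
  succ α + prec β

theorem relativeCommutator_apply (m : Ω → Ω → A →ₗ[k] A →ₗ[k] A) (α β : Ω) (x y : A) :
    relativeCommutator m α β x y = m α β x y - m β α y x :=
  rfl

theorem familyProduct_apply (prec succ : Ω → A →ₗ[k] A →ₗ[k] A) (α β : Ω) (x y : A) :
    familyProduct prec succ α β x y = succ α x y + prec β x y :=
  rfl

theorem relativeCommutator_add_swap (m : Ω → Ω → A →ₗ[k] A →ₗ[k] A) (α β : Ω) (x y : A) :
    relativeCommutator m α β x y + relativeCommutator m β α y x = 0 := by
  rw [relativeCommutator_apply, relativeCommutator_apply, sub_add_sub_cancel, sub_self]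

theorem relativeCommutator_cyclic_sum [CommMagma Ω] (m : Ω → Ω → A →ₗ[k] A →ₗ[k] A)
    (α β γ : Ω) (x y z : A) :
    relativeCommutator m (α * β) γ (relativeCommutator m α β x y) z +
        relativeCommutator m (β * γ) α (relativeCommutator m β γ y z) x +
        relativeCommutator m (γ * α) β (relativeCommutator m γ α z x) y =
      (relativeAssociator m α β γ x y z - relativeAssociator m γ β α z y x) +
        (relativeAssociator m β γ α y z x - relativeAssociator m α γ β x z y) +
        (relativeAssociator m γ α β z x y - relativeAssociator m β α γ y x z) := by
  simp only [relativeCommutator_apply, relativeAssociator, map_sub, LinearMap.sub_apply,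
    mul_comm β α, mul_comm γ β, mul_comm α γ]
  abel

theorem IsRelativeAntiFlexible.isRelativeLie_relativeCommutator [CommMagma Ω]
    {m : Ω → Ω → A →ₗ[k] A →ₗ[k] A} (hm : IsRelativeAntiFlexible m) :
    IsRelativeLie (relativeCommutator m) where
  skew := relativeCommutator_add_swap m
  jacobi α β γ x y z := by
    rw [relativeCommutator_cyclic_sum, hm α β γ x y z, hm β γ α y z x, hm γ α β z x y]
    simp only [sub_self, add_zero]

theorem relativeAssociator_familyProduct [Mul Ω] (prec succ : Ω → A →ₗ[k] A →ₗ[k] A)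
    (α β γ : Ω) (x y z : A) :
    relativeAssociator (familyProduct prec succ) α β γ x y z =
      (succ (α * β) (succ α x y + prec β x y) z - succ α x (succ β y z)) +
        (prec γ (succ α x y) z - succ α x (prec γ y z)) +
        (prec γ (prec β x y) z - prec (β * γ) x (succ β y z + prec γ y z)) := by
  simp only [relativeAssociator, familyProduct_apply, map_add, LinearMap.add_apply]
  abel

theorem IsPreAntiFlexibleFamily.isRelativeAntiFlexible_familyProduct [Mul Ω]
    {prec succ : Ω → A →ₗ[k] A →ₗ[k] A} (h : IsPreAntiFlexibleFamily prec succ) :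
    IsRelativeAntiFlexible (familyProduct prec succ) := by
  intro α β γ x y z
  rw [relativeAssociator_familyProduct, relativeAssociator_familyProduct,
    h.outer α β x y z, h.middle α γ x y z, h.outer γ β z y x]
  abel

theorem preAntiFlexibleFamily_to_relativeLie_general [CommMagma Ω]
    {prec succ : Ω → A →ₗ[k] A →ₗ[k] A} (h : IsPreAntiFlexibleFamily prec succ) :
    IsRelativeLie (relativeCommutator (familyProduct prec succ)) :=
  h.isRelativeAntiFlexible_familyProduct.isRelativeLie_relativeCommutator

end

/-- the commutator bracket `[x,y]_{α,β} := (x ≻_α y + x ≺_β y) −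
(y ≻_β x + y ≺_α x)` of a pre-anti-flexible family algebra gives an Ω-relative
Lie algebra. -/
theorem preAntiFlexibleFamily_to_relativeLie
    (k : Type*) [Field k] (Ω : Type*) [CommSemigroup Ω]
    (A : Type*) [AddCommGroup A] [Module k A]
    (prec succ : Ω → A →ₗ[k] A →ₗ[k] A)
    (h1 : ∀ (α β : Ω) (x y z : A),
      prec β (succ α x y) z - succ α x (prec β y z) =
        prec α (succ β z y) x - succ β z (prec α y x))
    (h2 : ∀ (α β : Ω) (x y z : A),
      succ (α * β) (succ α x y + prec β x y) z - succ α x (succ β y z) =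
        prec α (prec β z y) x - prec (β * α) z (succ β y x + prec α y x))
    (br : Ω → Ω → A → A → A)
    (hbr : ∀ (α β : Ω) (x y : A),
      br α β x y = (succ α x y + prec β x y) - (succ β y x + prec α y x)) :
    (∀ (α β : Ω) (x y : A), br α β x y + br β α y x = 0) ∧
    (∀ (α β γ : Ω) (x y z : A),
      br (α * β) γ (br α β x y) z + br (β * γ) α (br β γ y z) x +
        br (γ * α) β (br γ α z x) y = 0) := by
  obtain rfl : br = fun α β x y ↦ relativeCommutator (familyProduct prec succ) α β x y := by
    funext α β x y
    exact hbr α β x y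
  have lie := preAntiFlexibleFamily_to_relativeLie_general ⟨h1, h2⟩
  exact ⟨lie.skew, lie.jacobi⟩
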